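/- arXiv:1901.09418 — 4 statements merged into one kernel-verified Lean document; each statement's English description precedes it below -/
import Mathlib

section
/- Every Nash equilibrium (p*, β*) of the price-anticipating mechanism is the all-zero profile: p*_m = 0 and β*_m = 0 for every m = 1,…,M. Hence the all-zero profile is the unique Nash equilibrium, the allocated rates at equilibrium are zero, and the efficiency loss relative to the SYSTEM optimum is 100%. -/
open Finset

/-- User `m`'s pay-off in the price-anticipating mechanism (single link of capacity `C`),
with `lam` the capacity price. -/
noncomputable def userPayoff (M : ℕ) (U : ℝ → ℝ) (C lam : ℝ)
    (p β : Fin M → ℝ) (m : Fin M) : ℝ :=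
  if (∑ i, Real.sqrt (p i * β i)) ≤ C then
    U (Real.sqrt (p m * β m)) - p m
  else
    U (2 * p m / (lam + Real.sqrt (lam ^ 2 + 4 * p m / β m))) - p m

/-- The link-supplier's pay-off in the price-anticipating mechanism. -/
noncomputable def linkPayoff (M : ℕ) (V : ℝ → ℝ) (C lam : ℝ)
    (p β : Fin M → ℝ) : ℝ :=
  if (∑ i, Real.sqrt (p i * β i)) ≤ C then
    -V (∑ i, Real.sqrt (p i * β i)) + ∑ i, p i
  else
    -V C + ∑ i, (1 / β i) * (2 * p i / (lam + Real.sqrt (lam ^ 2 + 4 * p i / β i))) ^ 2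

/-!
By bidding `0` the link-supplier carries no traffic and still collects every payment `∑ pᵢ`,
while in either regime it never collects more than that. A positive load therefore only adds cost,
so at equilibrium every rate is `0`. A user who receives nothing pays nothing, hence `p = 0`.
If `βₘ` were positive, user `m` could buy the rate `x` for `x² / βₘ`: a second-order cost against
the first-order gain `Uₘ'(0) x`, profitable for small `x`.
-/

open scoped Topology

/-- The rate allocated at capacity price `lam` to the user bidding `p` when the link-supplier bids
`b` for this user. At `b = 0` division by zero makes it `p / lam` instead of the limit `0`. -/
noncomputable def congestedRate (lam p b : ℝ) : ℝ :=
  2 * p / (lam + √(lam ^ 2 + 4 * p / b))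

/-- `lamFn` assigns to each bid profile the capacity price of a link of capacity `C`: it is zero
when the uncongested rates fit into the link, and otherwise makes the rates fill it exactly. -/
def IsCapacityPrice {M : ℕ} (C : ℝ) (lamFn : (Fin M → ℝ) → (Fin M → ℝ) → ℝ) : Prop :=
  ∀ p β : Fin M → ℝ, (∀ i, 0 ≤ p i) → (∀ i, 0 ≤ β i) →
    (∑ i, √(p i * β i) ≤ C → lamFn p β = 0) ∧
    (¬ ∑ i, √(p i * β i) ≤ C →
      0 < lamFn p β ∧ ∑ i, congestedRate (lamFn p β) (p i) (β i) = C)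

/-- Nash equilibria of the price-anticipating mechanism with user pay-offs `U`, supplier cost `V`,
capacity `C` and price function `lamFn`. The price is recomputed after every deviation. -/
structure IsNashEquilibrium {M : ℕ} (U : Fin M → ℝ → ℝ) (V : ℝ → ℝ) (C : ℝ)
    (lamFn : (Fin M → ℝ) → (Fin M → ℝ) → ℝ) (p β : Fin M → ℝ) : Prop where
  user_bid_nonneg : ∀ m, 0 ≤ p m
  link_bid_nonneg : ∀ m, 0 ≤ β m
  userPayoff_update_le : ∀ m q, 0 ≤ q →
    userPayoff M (U m) C (lamFn (Function.update p m q) β) (Function.update p m q) β m ≤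
      userPayoff M (U m) C (lamFn p β) p β m
  linkPayoff_le : ∀ β' : Fin M → ℝ, (∀ i, 0 ≤ β' i) →
    linkPayoff M V C (lamFn p β') p β' ≤ linkPayoff M V C (lamFn p β) p β

theorem eventually_add_mul_sq_lt_of_hasDerivWithinAt_Ici {f : ℝ → ℝ} {f' a : ℝ}
    (hf : HasDerivWithinAt f f' (Set.Ici a) a) (hf' : 0 < f') (c : ℝ) :
    ∀ᶠ x in 𝓝[>] a, f a + c * (x - a) ^ 2 < f x := by
  have hquad : HasDerivAt (fun x ↦ c * (x - a) ^ 2) 0 a := by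
    simpa using (((hasDerivAt_id a).sub_const a).pow 2).const_mul c
  have hdiff : HasDerivWithinAt (fun x ↦ f x - c * (x - a) ^ 2) f' (Set.Ioi a) a := by
    simpa only [sub_zero] using hf.Ioi_of_Ici.fun_sub hquad.hasDerivWithinAt
  have hslope := (hasDerivWithinAt_iff_tendsto_slope' Set.self_notMem_Ioi).1 hdiff
  filter_upwards [hslope.eventually_const_lt hf', self_mem_nhdsWithin] with x hx hax
  have hlt := (slope_pos_iff_of_le (le_of_lt hax)).1 hx
  simp only [sub_self] at hlt
  linarith

theorem congestedRate_nonneg {lam p b : ℝ} (hlam : 0 ≤ lam) (hp : 0 ≤ p) :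
    0 ≤ congestedRate lam p b := by
  unfold congestedRate
  positivity

theorem congestedRate_le_sqrt_mul {lam p b : ℝ} (hlam : 0 ≤ lam) (hp : 0 ≤ p) (hb : 0 < b) :
    congestedRate lam p b ≤ √(p * b) := by
  rcases hp.eq_or_lt with rfl | hp
  · simp [congestedRate]
  have hden : 2 * √(p / b) ≤ lam + √(lam ^ 2 + 4 * p / b) := calc
    2 * √(p / b) = √(4 * p / b) := by
      rw [mul_div_assoc, Real.sqrt_mul (by norm_num), show √(4 : ℝ) = 2 by norm_num]
    _ ≤ √(lam ^ 2 + 4 * p / b) := Real.sqrt_le_sqrt (le_add_of_nonneg_left (sq_nonneg lam))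
    _ ≤ lam + √(lam ^ 2 + 4 * p / b) := le_add_of_nonneg_left hlam
  calc congestedRate lam p b ≤ 2 * p / (2 * √(p / b)) := by
        unfold congestedRate
        gcongr
    _ = p / √(p / b) := mul_div_mul_left _ _ two_ne_zero
    _ = √(p * b) := by
      rw [div_eq_iff (by positivity), ← Real.sqrt_mul (by positivity),
        show p * b * (p / b) = p ^ 2 by field_simp, Real.sqrt_sq hp.le]

theorem one_div_mul_congestedRate_sq_le {lam p b : ℝ} (hlam : 0 ≤ lam) (hp : 0 ≤ p)
    (hb : 0 ≤ b) : 1 / b * congestedRate lam p b ^ 2 ≤ p := by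
  rcases hb.eq_or_lt with rfl | hb
  · simpa using hp
  calc 1 / b * congestedRate lam p b ^ 2 ≤ 1 / b * √(p * b) ^ 2 := by
        gcongr
        · exact congestedRate_nonneg hlam hp
        · exact congestedRate_le_sqrt_mul hlam hp hb
    _ = p := by
      rw [Real.sq_sqrt (by positivity)]
      field_simp

theorem linkPayoff_zero_right {M : ℕ} {V : ℝ → ℝ} {C : ℝ} (hC : 0 ≤ C) (lam : ℝ)
    (p : Fin M → ℝ) : linkPayoff M V C lam p 0 = -V 0 + ∑ i, p i := by
  simp [linkPayoff, hC]

theorem linkPayoff_lt_of_load_pos {M : ℕ} {V : ℝ → ℝ} {C lam : ℝ} {p β : Fin M → ℝ}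
    (hC : 0 < C) (hV : ∀ x, 0 < x → V 0 < V x) (hlam : 0 ≤ lam) (hp : ∀ i, 0 ≤ p i)
    (hβ : ∀ i, 0 ≤ β i) (hload : 0 < ∑ i, √(p i * β i)) :
    linkPayoff M V C lam p β < -V 0 + ∑ i, p i := by
  by_cases hfit : ∑ i, √(p i * β i) ≤ C
  · rw [linkPayoff, if_pos hfit]
    linarith [hV _ hload]
  · rw [linkPayoff, if_neg hfit]
    have hrevenue : ∑ i, 1 / β i * congestedRate lam (p i) (β i) ^ 2 ≤ ∑ i, p i :=
      sum_le_sum fun i _ ↦ one_div_mul_congestedRate_sq_le hlam (hp i) (hβ i)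
    exact add_lt_add_of_lt_of_le (neg_lt_neg (hV C hC)) hrevenue

theorem userPayoff_update_of_idle {M : ℕ} {U : ℝ → ℝ} {C lam q : ℝ} {p β : Fin M → ℝ} {m : Fin M}
    (hidle : ∀ i, √(p i * β i) = 0) (hfit : √(q * β m) ≤ C) :
    userPayoff M U C lam (Function.update p m q) β m = U √(q * β m) - q := by
  have hload : ∑ i, √(Function.update p m q i * β i) = √(q * β m) := by
    rw [sum_eq_single_of_mem m (mem_univ m), Function.update_self]
    intro i _ hi
    rw [Function.update_of_ne hi, hidle i]
  rw [userPayoff, if_pos (hload.trans_le hfit), Function.update_self]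

theorem IsCapacityPrice.nonneg {M : ℕ} {C : ℝ} {lamFn : (Fin M → ℝ) → (Fin M → ℝ) → ℝ}
    {p β : Fin M → ℝ} (hlamFn : IsCapacityPrice C lamFn) (hp : ∀ i, 0 ≤ p i)
    (hβ : ∀ i, 0 ≤ β i) : 0 ≤ lamFn p β := by
  obtain ⟨hfree, hcongested⟩ := hlamFn p β hp hβ
  by_cases hfit : ∑ i, √(p i * β i) ≤ C
  · exact (hfree hfit).ge
  · exact (hcongested hfit).1.le

namespace IsNashEquilibrium

variable {M : ℕ} {U : Fin M → ℝ → ℝ} {V : ℝ → ℝ} {C : ℝ}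
  {lamFn : (Fin M → ℝ) → (Fin M → ℝ) → ℝ} {p β : Fin M → ℝ}

theorem rate_eq_zero (h : IsNashEquilibrium U V C lamFn p β) (hC : 0 < C)
    (hV : ∀ x, 0 < x → V 0 < V x) (hlam : 0 ≤ lamFn p β) (m : Fin M) :
    √(p m * β m) = 0 := by
  have hnonneg : ∀ i ∈ univ, 0 ≤ √(p i * β i) := fun i _ ↦ Real.sqrt_nonneg _
  refine (sum_eq_zero_iff_of_nonneg hnonneg).1 ?_ m (mem_univ m)
  by_contra hload
  have hlt := linkPayoff_lt_of_load_pos hC hV hlam h.user_bid_nonneg h.link_bid_nonneg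
    ((sum_nonneg hnonneg).lt_of_ne' hload)
  have hle := h.linkPayoff_le 0 fun _ ↦ le_rfl
  rw [linkPayoff_zero_right hC.le] at hle
  exact hle.not_gt hlt

theorem utility_sub_le_of_idle (h : IsNashEquilibrium U V C lamFn p β) (hC : 0 ≤ C)
    (hidle : ∀ i, √(p i * β i) = 0) {m : Fin M} {q : ℝ} (hq : 0 ≤ q) (hfit : √(q * β m) ≤ C) :
    U m √(q * β m) - q ≤ U m 0 - p m := by
  have hcurrent : userPayoff M (U m) C (lamFn p β) p β m = U m 0 - p m := by
    simp [userPayoff, hidle, hC]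
  rw [← userPayoff_update_of_idle hidle hfit, ← hcurrent]
  exact h.userPayoff_update_le m q hq

theorem user_bid_eq_zero_of_idle (h : IsNashEquilibrium U V C lamFn p β) (hC : 0 ≤ C)
    (hidle : ∀ i, √(p i * β i) = 0) (m : Fin M) : p m = 0 := by
  have hle : p m ≤ 0 := by
    simpa [hC] using h.utility_sub_le_of_idle hC hidle (m := m) le_rfl
  exact hle.antisymm (h.user_bid_nonneg m)

theorem link_bid_eq_zero_of_idle (h : IsNashEquilibrium U V C lamFn p β) (hC : 0 < C)
    (hidle : ∀ i, √(p i * β i) = 0) {m : Fin M} {u : ℝ}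
    (hU : HasDerivWithinAt (U m) u (Set.Ici 0) 0) (hu : 0 < u) : β m = 0 := by
  by_contra hne
  have hβ : 0 < β m := (h.link_bid_nonneg m).lt_of_ne' hne
  have hprofit := eventually_add_mul_sq_lt_of_hasDerivWithinAt_Ici hU hu (β m)⁻¹
  obtain ⟨x, hgain, hx, hxC⟩ := (hprofit.and (Ioo_mem_nhdsGT hC)).exists
  have hrate : √(x ^ 2 / β m * β m) = x := by
    rw [div_mul_cancel₀ _ hne, Real.sqrt_sq hx.le]
  have hle := h.utility_sub_le_of_idle hC.le hidle (m := m) (q := x ^ 2 / β m)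
    (by positivity) (hrate.trans_le hxC.le)
  rw [hrate, h.user_bid_eq_zero_of_idle hC.le hidle m, div_eq_inv_mul] at hle
  rw [sub_zero] at hgain
  linarith

end IsNashEquilibrium

theorem statement4_general {M : ℕ} {C : ℝ} (hC : 0 < C)
    {U : Fin M → ℝ → ℝ} {U'₀ : Fin M → ℝ}
    (hU : ∀ m, HasDerivWithinAt (U m) (U'₀ m) (Set.Ici 0) 0) (hU'₀ : ∀ m, 0 < U'₀ m)
    {V : ℝ → ℝ} (hV : ∀ x, 0 < x → V 0 < V x)
    {lamFn : (Fin M → ℝ) → (Fin M → ℝ) → ℝ} (hlamFn : IsCapacityPrice C lamFn)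
    {p β : Fin M → ℝ} (h : IsNashEquilibrium U V C lamFn p β) :
    (∀ m, p m = 0) ∧ (∀ m, β m = 0) ∧ (∀ m, √(p m * β m) = 0) := by
  have hidle := h.rate_eq_zero hC hV (hlamFn.nonneg h.user_bid_nonneg h.link_bid_nonneg)
  exact ⟨h.user_bid_eq_zero_of_idle hC.le hidle,
    fun m ↦ h.link_bid_eq_zero_of_idle hC hidle (hU m) (hU'₀ m), hidle⟩

/-- Uniqueness: every Nash equilibrium of the price-anticipating
mechanism is the all-zero profile.  If `(p, β)` is a Nash equilibrium — no user can
strictly improve by a unilateral deviation, nor can the link-supplier — then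
`p m = 0` and `β m = 0` for every `m`; in particular all allocated rates
`√(p m β m)` are zero (100% efficiency loss). -/
theorem statement4
    (M : ℕ) (hM : 0 < M) (C : ℝ) (hC : 0 < C)
    (U : Fin M → ℝ → ℝ) (V : ℝ → ℝ)
    (hUconc : ∀ m, ConcaveOn ℝ (Set.Ici 0) (U m))
    (hUmono : ∀ m, StrictMonoOn (U m) (Set.Ici 0))
    (hUdiff : ∀ m, ∀ x ∈ Set.Ici (0:ℝ), DifferentiableAt ℝ (U m) x)
    (hUderivcont : ∀ m, ContinuousOn (deriv (U m)) (Set.Ici 0))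
    (hUderiv0 : ∀ m, 0 < deriv (U m) 0)
    (hVconv : StrictConvexOn ℝ (Set.Ici 0) V)
    (hVmono : StrictMonoOn V (Set.Ici 0))
    (hVdiff : ∀ x ∈ Set.Ici (0:ℝ), DifferentiableAt ℝ V x)
    (hVderivcont : ContinuousOn (deriv V) (Set.Ici 0))
    (lamFn : (Fin M → ℝ) → (Fin M → ℝ) → ℝ)
    (hlamFn : ∀ p β : Fin M → ℝ, (∀ i, 0 ≤ p i) → (∀ i, 0 ≤ β i) →
      ((∑ i, Real.sqrt (p i * β i)) ≤ C → lamFn p β = 0) ∧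
      (¬ (∑ i, Real.sqrt (p i * β i)) ≤ C →
        0 < lamFn p β ∧
        (∑ i, 2 * p i /
          (lamFn p β + Real.sqrt ((lamFn p β) ^ 2 + 4 * p i / β i))) = C))
    (p β : Fin M → ℝ)
    (hp : ∀ m, 0 ≤ p m) (hβ : ∀ m, 0 ≤ β m)
    -- Nash equilibrium: no user benefits from a unilateral deviation …
    (hNEuser : ∀ m : Fin M, ∀ q : ℝ, 0 ≤ q →
      userPayoff M (U m) C (lamFn (Function.update p m q) β)
          (Function.update p m q) β m ≤
      userPayoff M (U m) C (lamFn p β) p β m)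
    -- … nor does the link-supplier
    (hNElink : ∀ β' : Fin M → ℝ, (∀ i, 0 ≤ β' i) →
      linkPayoff M V C (lamFn p β') p β' ≤
      linkPayoff M V C (lamFn p β) p β) :
    (∀ m, p m = 0) ∧ (∀ m, β m = 0) ∧ (∀ m, Real.sqrt (p m * β m) = 0) :=
  statement4_general hC (fun m ↦ (hUdiff m 0 Set.self_mem_Ici).hasDerivAt.hasDerivWithinAt)
    hUderiv0 (fun _ hx ↦ hVmono Set.self_mem_Ici hx.le hx) hlamFn ⟨hp, hβ, hNEuser, hNElink⟩
end

section
/- Let U : [0,∞) → ℝ be concave, strictly increasing and continuously differentiable with U'(0) finite, and for β > 0 let r_β be the unique nonnegative solution of U'(r) = 2r/β, with r_0 := 0. Then: (i) 0 ≤ r_β ≤ (U'(0)/2)·β for all β ≥ 0, so r_β → 0 as β → 0⁺; and (ii) the map β ↦ r_β is Lipschitz continuous on [0,∞) with Lipschitz constant U'(0)/2, i.e., |r_{β₁} − r_{β₂}| ≤ (U'(0)/2)|β₁ − β₂| for all β₁, β₂ ≥ 0. Moreover r_β is nondecreasing in β. -/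
open Finset

/-!
Cleared of its denominator, the equation `U'(r) = 2r/β` reads `r = g(r) β` with `g = U'/2`, and all
that matters about `g` is that it is nonincreasing, which is the concavity of `U`. For `a ≤ b`, a
strict inequality `r_b < r_a` would give `0 < g(r_a) ≤ g(r_b)`, hence
`r_a = g(r_a) a ≤ g(r_b) b = r_b`; so `r_a ≤ r_b`. Then `g(r_b) ≤ g(r_a)` and
`r_b - r_a ≤ g(r_b) (b - a) ≤ g(0) (b - a)`.
-/

/-- A branch `β ↦ r β` of nonnegative solutions of the scaled fixed-point equation `x = g x * β`,
`0 ≤ β`. Being free of division, the equation makes sense at `β = 0` too, where it says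
`r 0 = 0`. -/
structure IsFixedPointBranch {R : Type*} [Mul R] [Zero R] [LE R] (g r : R → R) : Prop where
  nonneg : ∀ β, 0 ≤ β → 0 ≤ r β
  eq_mul : ∀ β, 0 ≤ β → r β = g (r β) * β

namespace IsFixedPointBranch

section Preorder

variable {R : Type*} [MulZeroClass R] [Preorder R] {g r : R → R} {β : R}

theorem apply_le_apply_zero (h : IsFixedPointBranch g r) (hg : AntitoneOn g (Set.Ici 0))
    (hβ : 0 ≤ β) : g (r β) ≤ g 0 :=
  hg Set.self_mem_Ici (h.nonneg β hβ) (h.nonneg β hβ)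

theorem le_mul [MulPosMono R] (h : IsFixedPointBranch g r) (hg : AntitoneOn g (Set.Ici 0))
    (hβ : 0 ≤ β) : r β ≤ g 0 * β :=
  calc r β = g (r β) * β := h.eq_mul β hβ
    _ ≤ g 0 * β := mul_le_mul_of_nonneg_right (h.apply_le_apply_zero hg hβ) hβ

open Filter Topology in
theorem tendsto_nhdsGE_zero [MulPosMono R] [TopologicalSpace R] [OrderTopology R]
    [SeparatelyContinuousMul R] (h : IsFixedPointBranch g r) (hg : AntitoneOn g (Set.Ici 0)) :
    Tendsto r (𝓝[≥] 0) (𝓝 0) := by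
  have bound_tendsto : Tendsto (g 0 * ·) (𝓝[≥] 0) (𝓝 0) :=
    ((continuous_const_mul (g 0)).tendsto' 0 0 (mul_zero _)).mono_left nhdsWithin_le_nhds
  refine tendsto_of_tendsto_of_tendsto_of_le_of_le' tendsto_const_nhds bound_tendsto ?_ ?_
  · filter_upwards [self_mem_nhdsWithin] with β hβ using h.nonneg β hβ
  · filter_upwards [self_mem_nhdsWithin] with β hβ using h.le_mul hg hβ

end Preorder

section LinearOrder

variable {R : Type*} [MulZeroClass R] [LinearOrder R] [MulPosMono R] {g r : R → R} {β : R}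

theorem apply_pos (h : IsFixedPointBranch g r) (hβ : 0 ≤ β) (hr : 0 < r β) : 0 < g (r β) := by
  by_contra! hg
  refine hr.not_ge ?_
  calc r β = g (r β) * β := h.eq_mul β hβ
    _ ≤ 0 := mul_nonpos_of_nonpos_of_nonneg hg hβ

theorem monotoneOn [PosMulMono R] (h : IsFixedPointBranch g r) (hg : AntitoneOn g (Set.Ici 0)) :
    MonotoneOn r (Set.Ici 0) := by
  intro a ha b hb hab
  by_contra! hlt
  have g_pos : 0 < g (r a) := h.apply_pos ha ((h.nonneg b hb).trans_lt hlt)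
  have g_le : g (r a) ≤ g (r b) := hg (h.nonneg b hb) (h.nonneg a ha) hlt.le
  refine hlt.not_ge ?_
  calc r a = g (r a) * a := h.eq_mul a ha
    _ ≤ g (r b) * b := mul_le_mul g_le hab ha (g_pos.le.trans g_le)
    _ = r b := (h.eq_mul b hb).symm

end LinearOrder

section OrderedRing

variable {R : Type*} [Ring R] [LinearOrder R] [IsOrderedRing R] {g r : R → R} {a b : R}

theorem sub_le_mul_sub (h : IsFixedPointBranch g r) (hg : AntitoneOn g (Set.Ici 0))
    (ha : 0 ≤ a) (hab : a ≤ b) : r b - r a ≤ g 0 * (b - a) := by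
  have hb : 0 ≤ b := ha.trans hab
  have g_le : g (r b) ≤ g (r a) := hg (h.nonneg a ha) (h.nonneg b hb) (h.monotoneOn hg ha hb hab)
  calc r b - r a = g (r b) * b - g (r a) * a := by rw [← h.eq_mul b hb, ← h.eq_mul a ha]
    _ ≤ g (r b) * b - g (r b) * a := sub_le_sub_left (mul_le_mul_of_nonneg_right g_le ha) _
    _ = g (r b) * (b - a) := (mul_sub _ _ _).symm
    _ ≤ g 0 * (b - a) :=
      mul_le_mul_of_nonneg_right (h.apply_le_apply_zero hg hb) (sub_nonneg.2 hab)

theorem abs_sub_le (h : IsFixedPointBranch g r) (hg : AntitoneOn g (Set.Ici 0))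
    (ha : 0 ≤ a) (hb : 0 ≤ b) : |r a - r b| ≤ g 0 * |a - b| := by
  wlog hab : a ≤ b generalizing a b
  · rw [abs_sub_comm, abs_sub_comm a]
    exact this hb ha (le_of_not_ge hab)
  rw [abs_sub_comm, abs_sub_comm a, abs_of_nonneg (sub_nonneg.2 (h.monotoneOn hg ha hb hab)),
    abs_of_nonneg (sub_nonneg.2 hab)]
  exact h.sub_le_mul_sub hg ha hab

end OrderedRing

theorem of_eq_mul_div {K : Type*} [Field K] [PartialOrder K] {f r : K → K} {c : K} (hc : c ≠ 0)
    (hr0 : r 0 = 0) (hr : ∀ β, 0 < β → 0 ≤ r β ∧ f (r β) = c * r β / β) :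
    IsFixedPointBranch (fun x => f x / c) r where
  nonneg β hβ := by
    rcases hβ.eq_or_lt with rfl | hpos
    · exact hr0.ge
    · exact (hr β hpos).1
  eq_mul β hβ := by
    rcases hβ.eq_or_lt with rfl | hpos
    · rw [hr0, mul_zero]
    · have hβ_ne : β ≠ 0 := hpos.ne'
      rw [(hr β hpos).2]
      field_simp

end IsFixedPointBranch

theorem statement6_general {K : Type*} [Field K] [LinearOrder K] [IsStrictOrderedRing K]
    [TopologicalSpace K] [OrderTopology K] {f r : K → K} (hf : AntitoneOn f (Set.Ici 0))
    (hr0 : r 0 = 0) (hr : ∀ β, 0 < β → 0 ≤ r β ∧ f (r β) = 2 * r β / β) :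
    (∀ β, 0 ≤ β → 0 ≤ r β ∧ r β ≤ f 0 / 2 * β) ∧
    Filter.Tendsto r (nhdsWithin 0 (Set.Ioi 0)) (nhds 0) ∧
    (∀ β₁ β₂, 0 ≤ β₁ → 0 ≤ β₂ → |r β₁ - r β₂| ≤ f 0 / 2 * |β₁ - β₂|) ∧
    (∀ β₁ β₂, 0 ≤ β₁ → β₁ ≤ β₂ → r β₁ ≤ r β₂) := by
  have branch : IsFixedPointBranch (fun x => f x / 2) r := .of_eq_mul_div two_ne_zero hr0 hr
  have half_antitone : AntitoneOn (fun x => f x / 2) (Set.Ici 0) := fun x hx y hy hxy =>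
    div_le_div_of_nonneg_right (hf hx hy hxy) zero_le_two
  refine ⟨fun β hβ => ⟨branch.nonneg β hβ, branch.le_mul half_antitone hβ⟩, ?_,
    fun _ _ => branch.abs_sub_le half_antitone,
    fun _ _ h₁ h₁₂ => branch.monotoneOn half_antitone h₁ (h₁.trans h₁₂) h₁₂⟩
  exact (branch.tendsto_nhdsGE_zero half_antitone).mono_left
    (nhdsWithin_mono _ Set.Ioi_subset_Ici_self)

/-- Regularity of the best-response allocation `β ↦ r_β`.
Let `U` be concave, strictly increasing, continuously differentiable with
`U'(0)` finite, and for `β > 0` let `r β` be the (unique) nonnegative solution of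
`U'(r) = 2r/β`, with `r 0 = 0`.  Then:
(i) `0 ≤ r β ≤ (U'(0)/2)·β` for all `β ≥ 0`, so `r β → 0` as `β → 0⁺`;
(ii) `r` is Lipschitz on `[0,∞)` with constant `U'(0)/2`;
moreover `r` is nondecreasing. -/
theorem statement6
    (U : ℝ → ℝ)
    (hUconc : ConcaveOn ℝ (Set.Ici 0) U)
    (hUmono : StrictMonoOn U (Set.Ici 0))
    (hUdiff : ∀ x ∈ Set.Ici (0:ℝ), DifferentiableAt ℝ U x)
    (hUderivcont : ContinuousOn (deriv U) (Set.Ici 0))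
    (r : ℝ → ℝ) (hr0 : r 0 = 0)
    (hr : ∀ β : ℝ, 0 < β → 0 ≤ r β ∧ deriv U (r β) = 2 * r β / β) :
    -- (i)
    (∀ β : ℝ, 0 ≤ β → 0 ≤ r β ∧ r β ≤ deriv U 0 / 2 * β) ∧
    Filter.Tendsto r (nhdsWithin 0 (Set.Ioi 0)) (nhds 0) ∧
    -- (ii)
    (∀ β₁ β₂ : ℝ, 0 ≤ β₁ → 0 ≤ β₂ →
      |r β₁ - r β₂| ≤ deriv U 0 / 2 * |β₁ - β₂|) ∧
    -- monotonicity
    (∀ β₁ β₂ : ℝ, 0 ≤ β₁ → β₁ ≤ β₂ → r β₁ ≤ r β₂) := by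
  exact statement6_general (hUconc.antitoneOn_deriv hUdiff) hr0 hr
end

section
/- Suppose additionally that x·U_m'(x) → ∞ as x → ∞ for every m, and V(x)/x → ∞ as x → ∞. Then the supremum of the function β ↦ −V(Σ_m r_{β_m}) + Σ_m r_{β_m}²/β_m over all β = (β_1,…,β_M) with β_m ≥ 0 (with the convention r_{β_m}²/β_m = 0 when β_m = 0) is attained, i.e., the set 𝓑* of maximizers is nonempty. Consequently, a Stackelberg equilibrium of the game with the link-supplier as lead player exists. -/
open Finset

/-!
Parametrize by rates instead of bids. The condition `U_m'(r) = 2 r / β` reads `r / U_m'(r) = β / 2`,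
and `x ↦ x / U_m'(x)` is strictly increasing since `U_m'` is positive and nonincreasing; hence
`β ↦ r_{m,β}` maps `[0, ∞)` onto `[0, ∞)`. In terms of the rates `s_m = r_{m,β_m}` the objective is
`-V (∑ s_m) + ∑ s_m U_m'(s_m) / 2`, a continuous function. Its second sum is at most a constant
multiple of `∑ s_m`, so the superlinear growth of `V` makes it tend to `-∞` at infinity.
-/

section RealFunctions

variable {f u V : ℝ → ℝ}

lemma deriv_pos_of_concaveOn_of_strictMonoOn {S : Set ℝ} {x y : ℝ} (hconc : ConcaveOn ℝ S f)
    (hmono : StrictMonoOn f S) (hx : x ∈ S) (hy : y ∈ S) (hxy : x < y)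
    (hdiff : DifferentiableAt ℝ f x) : 0 < deriv f x := by
  have hslope : 0 < slope f x y := by
    rw [slope_def_field]
    exact div_pos (sub_pos.2 (hmono hx hy hxy)) (sub_pos.2 hxy)
  exact hslope.trans_le (hconc.slope_le_deriv hx hy hxy hdiff)

lemma strictMonoOn_id_div_of_antitoneOn (hpos : ∀ x ∈ Set.Ici 0, 0 < u x)
    (hanti : AntitoneOn u (Set.Ici 0)) : StrictMonoOn (fun x => x / u x) (Set.Ici 0) := by
  intro x hx y hy hxy
  calc x / u x ≤ x / u y := div_le_div_of_nonneg_left hx (hpos y hy) (hanti hx hy hxy.le)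
    _ < y / u y := div_lt_div_of_pos_right hxy (hpos y hy)

lemma tendsto_sub_mul_atTop_of_tendsto_div (hV : Filter.Tendsto (fun x => V x / x) .atTop .atTop)
    (K : ℝ) : Filter.Tendsto (fun x => V x - K * x) .atTop .atTop := by
  have hprod : Filter.Tendsto (fun x => (V x / x + -K) * x) .atTop .atTop :=
    (Filter.tendsto_atTop_add_const_right _ (-K) hV).atTop_mul_atTop₀ Filter.tendsto_id
  refine hprod.congr' ?_
  filter_upwards [Filter.eventually_ne_atTop 0] with x hx
  field_simp
  ring

end RealFunctions

lemma tendsto_sum_cocompact_inf_principal_Ici {ι : Type*} [Fintype ι] :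
    Filter.Tendsto (fun s : ι → ℝ => ∑ m, s m)
      (Filter.cocompact (ι → ℝ) ⊓ Filter.principal (Set.Ici 0)) .atTop := by
  refine Filter.tendsto_atTop_mono' _ ?_
    ((tendsto_norm_cocompact_atTop (E := ι → ℝ)).mono_left inf_le_left)
  refine Filter.eventually_inf_principal.2 (.of_forall fun s (hs : 0 ≤ s) => ?_)
  refine (pi_norm_le_iff_of_nonneg (sum_nonneg fun m _ => hs m)).2 fun m => ?_
  rw [Real.norm_of_nonneg (hs m)]
  exact single_le_sum (fun i _ => hs i) (mem_univ m)

/-- `r β` is the rate at which a user with marginal pay-off `u` best-responds to the link bid `β`: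
the nonnegative solution of `u (r β) = 2 * r β / β` when `0 < β`, and `0` when `β = 0`. -/
structure IsBestResponseRate (u r : ℝ → ℝ) : Prop where
  map_zero : r 0 = 0
  optimality : ∀ β, 0 < β → 0 ≤ r β ∧ u (r β) = 2 * r β / β

namespace IsBestResponseRate

variable {u r : ℝ → ℝ} {β : ℝ}

lemma nonneg (hr : IsBestResponseRate u r) (hβ : 0 ≤ β) : 0 ≤ r β := by
  rcases hβ.eq_or_lt with rfl | hβ
  · exact hr.map_zero.ge
  · exact (hr.optimality β hβ).1

lemma sq_div_eq (hr : IsBestResponseRate u r) (hβ : 0 ≤ β) :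
    r β ^ 2 / β = r β * u (r β) / 2 := by
  rcases hβ.eq_or_lt with rfl | hβ
  · simp [hr.map_zero]
  · rw [(hr.optimality β hβ).2]
    field_simp

lemma div_eq (hr : IsBestResponseRate u r) (hpos : ∀ x ∈ Set.Ici 0, 0 < u x) (hβ : 0 ≤ β) :
    r β / u (r β) = β / 2 := by
  rcases hβ.eq_or_lt with rfl | hβ
  · simp [hr.map_zero]
  · obtain ⟨hr_nonneg, hopt⟩ := hr.optimality β hβ
    rw [div_eq_iff (hpos _ hr_nonneg).ne', hopt]
    field_simp

lemma surjOn_Ici (hr : IsBestResponseRate u r) (hpos : ∀ x ∈ Set.Ici 0, 0 < u x)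
    (hanti : AntitoneOn u (Set.Ici 0)) : Set.SurjOn r (Set.Ici 0) (Set.Ici 0) := by
  intro s (hs : 0 ≤ s)
  have hβ : 0 ≤ 2 * (s / u s) := mul_nonneg zero_le_two (div_nonneg hs (hpos s hs).le)
  refine ⟨2 * (s / u s), hβ, ?_⟩
  refine (strictMonoOn_id_div_of_antitoneOn hpos hanti).injOn (hr.nonneg hβ) hs ?_
  exact (hr.div_eq hpos hβ).trans (mul_div_cancel_left₀ _ two_ne_zero)

end IsBestResponseRate

/-- The link-supplier's pay-off as a function of the vector `s` of rates rather than of the bids,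
for users with marginal pay-offs `u`: the payment `s m ^ 2 / β m` of user `m` becomes
`s m * u m (s m) / 2` once `β m` is eliminated by means of `u m (s m) = 2 * s m / β m`. -/
noncomputable def supplierPayoff {ι : Type*} [Fintype ι] (u : ι → ℝ → ℝ) (V : ℝ → ℝ)
    (s : ι → ℝ) : ℝ :=
  -V (∑ m, s m) + ∑ m, s m * u m (s m) / 2

section SupplierPayoff

variable {ι : Type*} [Fintype ι] {u r : ι → ℝ → ℝ} {V : ℝ → ℝ}

lemma supplierPayoff_bestResponse (hr : ∀ m, IsBestResponseRate (u m) (r m)) {β : ι → ℝ}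
    (hβ : 0 ≤ β) :
    supplierPayoff u V (fun m => r m (β m)) =
      -V (∑ m, r m (β m)) + ∑ m, r m (β m) ^ 2 / β m := by
  simp only [supplierPayoff, fun m => (hr m).sq_div_eq (hβ m)]

lemma continuousOn_supplierPayoff (hu : ∀ m, ContinuousOn (u m) (Set.Ici 0))
    (hV : ContinuousOn V (Set.Ici 0)) : ContinuousOn (supplierPayoff u V) (Set.Ici 0) := by
  have hcost : ContinuousOn (fun s : ι → ℝ => V (∑ m, s m)) (Set.Ici 0) :=
    hV.comp (by fun_prop) fun s hs => sum_nonneg fun m _ => hs m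
  have hmarginal (m : ι) : ContinuousOn (fun s : ι → ℝ => u m (s m)) (Set.Ici 0) :=
    (hu m).comp (by fun_prop) fun s hs => hs m
  exact hcost.neg.add (continuousOn_finsetSum _ fun m _ =>
    ((continuous_apply m).continuousOn.mul (hmarginal m)).div_const 2)

lemma supplierPayoff_le (hanti : ∀ m, AntitoneOn (u m) (Set.Ici 0)) {K : ℝ}
    (hK : ∀ m, u m 0 ≤ K) {s : ι → ℝ} (hs : 0 ≤ s) :
    supplierPayoff u V s ≤ -(V (∑ m, s m) - K / 2 * ∑ m, s m) := by
  have hpayment (m : ι) : s m * u m (s m) / 2 ≤ K / 2 * s m := by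
    have hbound : u m (s m) ≤ K := (hanti m Set.self_mem_Ici (hs m) (hs m)).trans (hK m)
    linarith [mul_le_mul_of_nonneg_left hbound (hs m)]
  have hsum : ∑ m, s m * u m (s m) / 2 ≤ K / 2 * ∑ m, s m := by
    rw [mul_sum]
    exact sum_le_sum fun m _ => hpayment m
  unfold supplierPayoff
  linarith

lemma tendsto_supplierPayoff_atBot (hanti : ∀ m, AntitoneOn (u m) (Set.Ici 0))
    (hV : Filter.Tendsto (fun x => V x / x) .atTop .atTop) :
    Filter.Tendsto (supplierPayoff u V)
      (Filter.cocompact (ι → ℝ) ⊓ Filter.principal (Set.Ici 0)) .atBot := by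
  obtain ⟨K, hK⟩ := (Set.finite_range fun m => u m 0).bddAbove
  have hbound := Filter.tendsto_neg_atTop_atBot.comp
    ((tendsto_sub_mul_atTop_of_tendsto_div hV (K / 2)).comp
      (tendsto_sum_cocompact_inf_principal_Ici (ι := ι)))
  refine Filter.tendsto_atBot_mono' _ ?_ hbound
  exact Filter.eventually_inf_principal.2 (.of_forall fun s hs =>
    supplierPayoff_le hanti (fun m => hK (Set.mem_range_self m)) hs)

lemma exists_isMaxOn_supplierPayoff (hcont : ∀ m, ContinuousOn (u m) (Set.Ici 0))
    (hanti : ∀ m, AntitoneOn (u m) (Set.Ici 0)) (hVcont : ContinuousOn V (Set.Ici 0))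
    (hVgrow : Filter.Tendsto (fun x => V x / x) .atTop .atTop) :
    ∃ s ∈ Set.Ici 0, IsMaxOn (supplierPayoff u V) (Set.Ici 0) s :=
  (continuousOn_supplierPayoff hcont hVcont).exists_isMaxOn' isClosed_Ici Set.self_mem_Ici
    ((tendsto_supplierPayoff_atBot hanti hVgrow).eventually_le_atBot _)

lemma exists_isMaxOn_bestResponse (hpos : ∀ m, ∀ x ∈ Set.Ici 0, 0 < u m x)
    (hcont : ∀ m, ContinuousOn (u m) (Set.Ici 0)) (hanti : ∀ m, AntitoneOn (u m) (Set.Ici 0))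
    (hVcont : ContinuousOn V (Set.Ici 0))
    (hVgrow : Filter.Tendsto (fun x => V x / x) .atTop .atTop)
    (hr : ∀ m, IsBestResponseRate (u m) (r m)) :
    ∃ βs ∈ Set.Ici 0, IsMaxOn (fun β : ι → ℝ => -V (∑ m, r m (β m)) + ∑ m, r m (β m) ^ 2 / β m)
      (Set.Ici 0) βs := by
  obtain ⟨s, hs, hmax⟩ := exists_isMaxOn_supplierPayoff hcont hanti hVcont hVgrow
  choose βs hβs hrβs using fun m => (hr m).surjOn_Ici (hpos m) (hanti m) (hs m)
  obtain rfl : (fun m => r m (βs m)) = s := funext hrβs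
  refine ⟨βs, hβs, isMaxOn_iff.2 fun β (hβ : 0 ≤ β) => ?_⟩
  have hrates : (fun m => r m (β m)) ∈ Set.Ici 0 := fun m => (hr m).nonneg (hβ m)
  simpa only [supplierPayoff_bestResponse hr hβ, supplierPayoff_bestResponse hr hβs]
    using isMaxOn_iff.1 hmax _ hrates

end SupplierPayoff

theorem statement7_general {ι : Type*} [Fintype ι] (U : ι → ℝ → ℝ) (V : ℝ → ℝ)
    (hUconc : ∀ m, ConcaveOn ℝ (Set.Ici 0) (U m))
    (hUmono : ∀ m, StrictMonoOn (U m) (Set.Ici 0))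
    (hUdiff : ∀ m, ∀ x ∈ Set.Ici (0 : ℝ), DifferentiableAt ℝ (U m) x)
    (hUderivcont : ∀ m, ContinuousOn (deriv (U m)) (Set.Ici 0))
    (hVcont : ContinuousOn V (Set.Ici 0))
    (hVgrow : Filter.Tendsto (fun x => V x / x) .atTop .atTop)
    (r : ι → ℝ → ℝ) (hr : ∀ m, IsBestResponseRate (deriv (U m)) (r m)) :
    ∃ βs ∈ Set.Ici 0, IsMaxOn (fun β : ι → ℝ => -V (∑ m, r m (β m)) + ∑ m, r m (β m) ^ 2 / β m)
      (Set.Ici 0) βs := by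
  have hpos (m : ι) (x : ℝ) (hx : x ∈ Set.Ici 0) : 0 < deriv (U m) x :=
    have hx' : x + 1 ∈ Set.Ici 0 := add_nonneg hx zero_le_one
    deriv_pos_of_concaveOn_of_strictMonoOn (hUconc m) (hUmono m) hx hx' (lt_add_one x)
      (hUdiff m x hx)
  have hanti (m : ι) : AntitoneOn (deriv (U m)) (Set.Ici 0) :=
    (hUconc m).antitoneOn_deriv (hUdiff m)
  exact exists_isMaxOn_bestResponse hpos hUderivcont hanti hVcont hVgrow hr

/-- Existence of a Stackelberg equilibrium, single link,
uncapacitated.  Assume `x·U_m'(x) → ∞` and `V(x)/x → ∞` as `x → ∞`.  With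
`r m β` the nonnegative solution of `U_m'(r) = 2r/β` for `β > 0` (and `r m 0 = 0`),
the link-supplier's objective `β ↦ −V(Σ_m r m (β m)) + Σ_m (r m (β m))²/β m`
attains its maximum over the nonnegative orthant; hence a Stackelberg equilibrium
with the link as lead player exists. -/
theorem statement7
    (M : ℕ) (hM : 0 < M)
    (U : Fin M → ℝ → ℝ) (V : ℝ → ℝ)
    (hUconc : ∀ m, ConcaveOn ℝ (Set.Ici 0) (U m))
    (hUmono : ∀ m, StrictMonoOn (U m) (Set.Ici 0))
    (hUdiff : ∀ m, ∀ x ∈ Set.Ici (0:ℝ), DifferentiableAt ℝ (U m) x)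
    (hUderivcont : ∀ m, ContinuousOn (deriv (U m)) (Set.Ici 0))
    (hVconv : StrictConvexOn ℝ (Set.Ici 0) V)
    (hVmono : StrictMonoOn V (Set.Ici 0))
    (hVdiff : ∀ x ∈ Set.Ici (0:ℝ), DifferentiableAt ℝ V x)
    (hVderivcont : ContinuousOn (deriv V) (Set.Ici 0))
    (hUgrow : ∀ m, Filter.Tendsto (fun x => x * deriv (U m) x) Filter.atTop Filter.atTop)
    (hVgrow : Filter.Tendsto (fun x => V x / x) Filter.atTop Filter.atTop)
    (r : Fin M → ℝ → ℝ) (hr0 : ∀ m, r m 0 = 0)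
    (hr : ∀ m, ∀ β : ℝ, 0 < β → 0 ≤ r m β ∧ deriv (U m) (r m β) = 2 * r m β / β) :
    ∃ βs : Fin M → ℝ, (∀ m, 0 ≤ βs m) ∧
      ∀ β : Fin M → ℝ, (∀ m, 0 ≤ β m) →
        -V (∑ m, r m (β m)) + ∑ m, (r m (β m)) ^ 2 / β m ≤
        -V (∑ m, r m (βs m)) + ∑ m, (r m (βs m)) ^ 2 / βs m := by
  obtain ⟨βs, hβs, hmax⟩ := statement7_general U V hUconc hUmono hUdiff hUderivcont
    (fun x hx => (hVdiff x hx).continuousAt.continuousWithinAt) hVgrow r fun m => ⟨hr0 m, hr m⟩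
  exact ⟨βs, hβs, fun _ hβ => hmax hβ⟩
end

section
/- Fix link-cost functions V_1,…,V_L as above and let the user pay-offs be linear, U_m(x) = c_m x with c_m > 0 and c_1 = max_m c_m. The efficiency of the multiple-link Stackelberg equilibrium, defined as ℰ = [Σ_m U_m(Σ_ℓ x_{mℓ}^{B*}) − Σ_ℓ V_ℓ(Σ_m x_{mℓ}^{B*})] / [Σ_m U_m(Σ_ℓ x_{mℓ}^s) − Σ_ℓ V_ℓ(Σ_m x_{mℓ}^s)] where X^{B*} is the Stackelberg equilibrium rate matrix and X^s the social optimum rate matrix, satisfies ℰ = [Σ_ℓ (c_1 v_ℓ⁻¹(c_1/2) − V_ℓ(v_ℓ⁻¹(c_1/2)))]/[Σ_ℓ (c_1 v_ℓ⁻¹(c_1) − V_ℓ(v_ℓ⁻¹(c_1)))] ≥ inf_{c>0} [Σ_ℓ (c·v_ℓ⁻¹(c/2) − V_ℓ(v_ℓ⁻¹(c/2)))]/[Σ_ℓ (c·v_ℓ⁻¹(c) − V_ℓ(v_ℓ⁻¹(c)))]. In particular, if V_ℓ(x) = b_ℓ x² with b_ℓ > 0 for all ℓ, then ℰ ≥ 3/4.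 -/
open Finset

/-!
Only the user with slope `c₁` is served, so welfare collapses to `∑ ℓ, (c₁ * q ℓ - V ℓ (q ℓ))`, and
the efficiency is the member at `γ = c₁` of the family of ratios whose infimum is taken. These
ratios are nonnegative: the tangent of `V ℓ` at `w ℓ y` lies below `V ℓ` at `0`, that is,
`V ℓ (w ℓ y) ≤ y * w ℓ y`. For `V ℓ x = b ℓ * x ^ 2` the inverse marginal cost is `y / (2 * b ℓ)`,
and the surplus at slope `γ` and marginal cost `y` is proportional to `y * (2 * γ - y)`, which
equals `3 / 4 * γ ^ 2` at `y = γ / 2` and `γ ^ 2` at `y = γ`.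
-/

theorem tangent_le_of_convexOn_of_hasDerivWithinAt {S : Set ℝ} {f : ℝ → ℝ} {f' x a : ℝ}
    (hf : ConvexOn ℝ S f) (hx : x ∈ S) (ha : a ∈ S) (hf' : HasDerivWithinAt f f' S x) :
    f x + f' * (a - x) ≤ f a := by
  rcases lt_trichotomy a x with hax | rfl | hxa
  · have hslope := hf.slope_le_of_hasDerivWithinAt ha hx hax hf'
    rw [slope_def_field, div_le_iff₀ (sub_pos.mpr hax)] at hslope
    linarith
  · simp
  · have hslope := hf.le_slope_of_hasDerivWithinAt hx ha hxa hf'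
    rw [slope_def_field, le_div_iff₀ (sub_pos.mpr hxa)] at hslope
    linarith

/-- `w` is an inverse of the marginal cost `V'` on `(0, ∞)`, with values in `[0, ∞)`. The derivative
is taken within `[0, ∞)`, the domain of the cost function `V`. -/
def IsMarginalInverse (V w : ℝ → ℝ) : Prop :=
  ∀ y, 0 < y → 0 ≤ w y ∧ HasDerivWithinAt V y (Set.Ici 0) (w y)

namespace IsMarginalInverse

variable {V w : ℝ → ℝ} {y : ℝ}

theorem cost_le_mul (hw : IsMarginalInverse V w) (hV : ConvexOn ℝ (Set.Ici 0) V) (hV0 : V 0 = 0)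
    (hy : 0 < y) : V (w y) ≤ y * w y := by
  obtain ⟨hwy, hderiv⟩ := hw y hy
  have htangent := tangent_le_of_convexOn_of_hasDerivWithinAt hV hwy Set.self_mem_Ici hderiv
  rw [hV0] at htangent
  linarith

theorem eq_div_of_quadratic {b : ℝ} (hw : IsMarginalInverse V w) (hb : b ≠ 0)
    (hV : Set.EqOn V (fun x => b * x ^ 2) (Set.Ici 0)) (hy : 0 < y) : w y = y / (2 * b) := by
  obtain ⟨hwy, hderiv⟩ := hw y hy
  have hquad : HasDerivWithinAt V (b * (2 * w y)) (Set.Ici 0) (w y) := by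
    simpa using (((hasDerivAt_pow 2 (w y)).const_mul b).hasDerivWithinAt).congr_of_mem hV hwy
  have hmarginal : y = b * (2 * w y) := (uniqueDiffOn_Ici 0 _ hwy).eq_deriv _ hderiv hquad
  rw [eq_div_iff (mul_ne_zero two_ne_zero hb)]
  linarith

end IsMarginalInverse

section Links

variable {ι κ : Type*} [Fintype ι] [Fintype κ]

/-- The social welfare of the rate matrix `x` (users by links): the sum of the linear pay-offs with
slopes `c m`, less the sum of the link costs. -/
def welfare (c : ι → ℝ) (V : κ → ℝ → ℝ) (x : ι → κ → ℝ) : ℝ :=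
  (∑ m, c m * ∑ ℓ, x m ℓ) - ∑ ℓ, V ℓ (∑ m, x m ℓ)

/-- The rate matrix in which user `m₁` receives the rate `q ℓ` on link `ℓ` and all other users
receive nothing. -/
def soleUserRates [DecidableEq ι] (m₁ : ι) (q : κ → ℝ) (m : ι) (ℓ : κ) : ℝ :=
  if m = m₁ then q ℓ else 0

/-- The surplus of a single user with pay-off slope `γ` served at the link rates `q`. -/
def surplus (V : κ → ℝ → ℝ) (γ : ℝ) (q : κ → ℝ) : ℝ :=
  ∑ ℓ, (γ * q ℓ - V ℓ (q ℓ))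

/-- The ratio of Stackelberg surplus to optimal surplus for a single user with pay-off slope `γ`,
where `w` lists the inverse marginal costs of the links. -/
noncomputable def efficiencyRatio (V w : κ → ℝ → ℝ) (γ : ℝ) : ℝ :=
  surplus V γ (fun ℓ => w ℓ (γ / 2)) / surplus V γ (fun ℓ => w ℓ γ)

theorem welfare_soleUserRates [DecidableEq ι] (c : ι → ℝ) (V : κ → ℝ → ℝ) (m₁ : ι) (q : κ → ℝ) :
    welfare c V (soleUserRates m₁ q) = surplus V (c m₁) q := by
  have hpayoff : ∑ m, c m * ∑ ℓ, soleUserRates m₁ q m ℓ = ∑ ℓ, c m₁ * q ℓ := by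
    rw [Fintype.sum_eq_single m₁ fun m hm => by simp [soleUserRates, hm]]
    simp [soleUserRates, mul_sum]
  have hload (ℓ : κ) : ∑ m, soleUserRates m₁ q m ℓ = q ℓ := by simp [soleUserRates]
  simp only [welfare, surplus, hpayoff, hload, sum_sub_distrib]

variable {V w : κ → ℝ → ℝ}

theorem surplus_nonneg (hw : ∀ ℓ, IsMarginalInverse (V ℓ) (w ℓ))
    (hV : ∀ ℓ, ConvexOn ℝ (Set.Ici 0) (V ℓ)) (hV0 : ∀ ℓ, V ℓ 0 = 0) {y γ : ℝ} (hy : 0 < y)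
    (hyγ : y ≤ γ) : 0 ≤ surplus V γ (fun ℓ => w ℓ y) :=
  sum_nonneg fun ℓ _ => sub_nonneg.mpr <|
    ((hw ℓ).cost_le_mul (hV ℓ) (hV0 ℓ) hy).trans <| mul_le_mul_of_nonneg_right hyγ (hw ℓ y hy).1

theorem efficiencyRatio_nonneg (hw : ∀ ℓ, IsMarginalInverse (V ℓ) (w ℓ))
    (hV : ∀ ℓ, ConvexOn ℝ (Set.Ici 0) (V ℓ)) (hV0 : ∀ ℓ, V ℓ 0 = 0) {γ : ℝ} (hγ : 0 < γ) :
    0 ≤ efficiencyRatio V w γ :=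
  div_nonneg (surplus_nonneg hw hV hV0 (half_pos hγ) (half_le_self hγ.le))
    (surplus_nonneg hw hV hV0 hγ le_rfl)

theorem sInf_efficiencyRatio_le (hw : ∀ ℓ, IsMarginalInverse (V ℓ) (w ℓ))
    (hV : ∀ ℓ, ConvexOn ℝ (Set.Ici 0) (V ℓ)) (hV0 : ∀ ℓ, V ℓ 0 = 0) {γ₀ : ℝ} (hγ₀ : 0 < γ₀) :
    sInf {ρ | ∃ γ, 0 < γ ∧ ρ = efficiencyRatio V w γ} ≤ efficiencyRatio V w γ₀ := by
  refine csInf_le ⟨0, ?_⟩ ⟨γ₀, hγ₀, rfl⟩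
  rintro _ ⟨γ, hγ, rfl⟩
  exact efficiencyRatio_nonneg hw hV hV0 hγ

variable {b : κ → ℝ}

theorem surplus_of_quadratic (hw : ∀ ℓ, IsMarginalInverse (V ℓ) (w ℓ)) (hb : ∀ ℓ, b ℓ ≠ 0)
    (hV : ∀ ℓ, Set.EqOn (V ℓ) (fun x => b ℓ * x ^ 2) (Set.Ici 0)) (γ : ℝ) {y : ℝ} (hy : 0 < y) :
    surplus V γ (fun ℓ => w ℓ y) = y * (2 * γ - y) * ∑ ℓ, 1 / (4 * b ℓ) := by
  rw [surplus, mul_sum]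
  refine sum_congr rfl fun ℓ _ => ?_
  have hbℓ := hb ℓ
  rw [hV ℓ (hw ℓ y hy).1, (hw ℓ).eq_div_of_quadratic hbℓ (hV ℓ) hy]
  field

theorem efficiencyRatio_of_quadratic [Nonempty κ] (hw : ∀ ℓ, IsMarginalInverse (V ℓ) (w ℓ))
    (hb : ∀ ℓ, 0 < b ℓ) (hV : ∀ ℓ, Set.EqOn (V ℓ) (fun x => b ℓ * x ^ 2) (Set.Ici 0)) {γ : ℝ}
    (hγ : 0 < γ) : efficiencyRatio V w γ = 3 / 4 := by
  have hb_ne (ℓ : κ) : b ℓ ≠ 0 := (hb ℓ).ne'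
  have hsum : 0 < ∑ ℓ, 1 / (4 * b ℓ) :=
    sum_pos (fun ℓ _ => one_div_pos.mpr (mul_pos four_pos (hb ℓ))) univ_nonempty
  rw [efficiencyRatio, surplus_of_quadratic hw hb_ne hV γ (half_pos hγ),
    surplus_of_quadratic hw hb_ne hV γ hγ, mul_div_mul_right _ _ hsum.ne']
  field

theorem statement19_general [DecidableEq ι] [Nonempty κ] (c : ι → ℝ) (m₁ : ι) (hc : 0 < c m₁)
    (V w : κ → ℝ → ℝ) (hV : ∀ ℓ, ConvexOn ℝ (Set.Ici 0) (V ℓ)) (hV0 : ∀ ℓ, V ℓ 0 = 0)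
    (hw : ∀ ℓ, IsMarginalInverse (V ℓ) (w ℓ)) :
    let efficiency := welfare c V (soleUserRates m₁ fun ℓ => w ℓ (c m₁ / 2)) /
      welfare c V (soleUserRates m₁ fun ℓ => w ℓ (c m₁))
    efficiency = efficiencyRatio V w (c m₁) ∧
    sInf {ρ | ∃ γ, 0 < γ ∧ ρ = efficiencyRatio V w γ} ≤ efficiency ∧
    ∀ b : κ → ℝ, (∀ ℓ, 0 < b ℓ) →
      (∀ ℓ, Set.EqOn (V ℓ) (fun x => b ℓ * x ^ 2) (Set.Ici 0)) → efficiency = 3 / 4 := by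
  simp only [welfare_soleUserRates]
  exact ⟨rfl, sInf_efficiencyRatio_le hw hV hV0 hc,
    fun _ hb hquad => efficiencyRatio_of_quadratic hw hb hquad hc⟩

end Links

/-- Multi-link efficiency bound for linear user pay-offs.
With `U m x = c m x`, `c m > 0`, `c m₁` maximal, Stackelberg rates
`x^{B*}_{m₁ℓ} = v_ℓ⁻¹(c m₁/2)` (zero for other users) and social-optimal rates
`x^s_{m₁ℓ} = v_ℓ⁻¹(c m₁)` (zero for other users), the efficiency
`ℰ = [Σ_m U_m(Σ_ℓ x^{B*}_{mℓ}) − Σ_ℓ V_ℓ(Σ_m x^{B*}_{mℓ})] /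
     [Σ_m U_m(Σ_ℓ x^s_{mℓ}) − Σ_ℓ V_ℓ(Σ_m x^s_{mℓ})]`
equals `[Σ_ℓ (c₁ v_ℓ⁻¹(c₁/2) − V_ℓ(v_ℓ⁻¹(c₁/2)))]/[Σ_ℓ (c₁ v_ℓ⁻¹(c₁) − V_ℓ(v_ℓ⁻¹(c₁)))]`,
is bounded below by the infimum over `γ > 0` of the corresponding ratio, and is at
least `3/4` when every `V ℓ x = b ℓ x²` with `b ℓ > 0`. -/
theorem statement19
    (M L : ℕ) (hM : 0 < M) (hL : 0 < L)
    (c : Fin M → ℝ) (hc : ∀ m, 0 < c m)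
    (m₁ : Fin M) (hmax : ∀ m, c m ≤ c m₁)
    (V v w : Fin L → ℝ → ℝ)
    (hVconv : ∀ ℓ, StrictConvexOn ℝ (Set.Ici 0) (V ℓ))
    (hVmono : ∀ ℓ, StrictMonoOn (V ℓ) (Set.Ici 0))
    (hV0 : ∀ ℓ, V ℓ 0 = 0)
    (hv : ∀ ℓ, ∀ x ∈ Set.Ici (0:ℝ), HasDerivAt (V ℓ) (v ℓ x) x)
    (hv0 : ∀ ℓ, v ℓ 0 = 0)
    (hvmono : ∀ ℓ, StrictMonoOn (v ℓ) (Set.Ici 0))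
    (hvcont : ∀ ℓ, ContinuousOn (v ℓ) (Set.Ici 0))
    (hw : ∀ ℓ, ∀ y : ℝ, 0 < y → 0 ≤ w ℓ y ∧ v ℓ (w ℓ y) = y) :
    -- ℰ equals the ratio of sums over links …
    ((∑ m, c m * (∑ ℓ, (if m = m₁ then w ℓ (c m₁ / 2) else 0))) -
          (∑ ℓ, V ℓ (∑ m, (if m = m₁ then w ℓ (c m₁ / 2) else 0)))) /
        ((∑ m, c m * (∑ ℓ, (if m = m₁ then w ℓ (c m₁) else 0))) -
          (∑ ℓ, V ℓ (∑ m, (if m = m₁ then w ℓ (c m₁) else 0)))) =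
      (∑ ℓ, (c m₁ * w ℓ (c m₁ / 2) - V ℓ (w ℓ (c m₁ / 2)))) /
        (∑ ℓ, (c m₁ * w ℓ (c m₁) - V ℓ (w ℓ (c m₁)))) ∧
    -- … is bounded below by the infimum over γ > 0 …
    sInf {ρ : ℝ | ∃ γ : ℝ, 0 < γ ∧
        ρ = (∑ ℓ, (γ * w ℓ (γ / 2) - V ℓ (w ℓ (γ / 2)))) /
          (∑ ℓ, (γ * w ℓ γ - V ℓ (w ℓ γ)))} ≤
      ((∑ m, c m * (∑ ℓ, (if m = m₁ then w ℓ (c m₁ / 2) else 0))) -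
          (∑ ℓ, V ℓ (∑ m, (if m = m₁ then w ℓ (c m₁ / 2) else 0)))) /
        ((∑ m, c m * (∑ ℓ, (if m = m₁ then w ℓ (c m₁) else 0))) -
          (∑ ℓ, V ℓ (∑ m, (if m = m₁ then w ℓ (c m₁) else 0)))) ∧
    -- … and is at least 3/4 for quadratic link costs
    (∀ b : Fin L → ℝ, (∀ ℓ, 0 < b ℓ) →
      (∀ ℓ, ∀ x ∈ Set.Ici (0:ℝ), V ℓ x = b ℓ * x ^ 2) →
      3 / 4 ≤
        ((∑ m, c m * (∑ ℓ, (if m = m₁ then w ℓ (c m₁ / 2) else 0))) -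
            (∑ ℓ, V ℓ (∑ m, (if m = m₁ then w ℓ (c m₁ / 2) else 0)))) /
          ((∑ m, c m * (∑ ℓ, (if m = m₁ then w ℓ (c m₁) else 0))) -
            (∑ ℓ, V ℓ (∑ m, (if m = m₁ then w ℓ (c m₁) else 0))))) := by
  have : Nonempty (Fin L) := ⟨⟨0, hL⟩⟩
  have hinv (ℓ : Fin L) : IsMarginalInverse (V ℓ) (w ℓ) := fun y hy =>
    ⟨(hw ℓ y hy).1, by simpa only [(hw ℓ y hy).2] using (hv ℓ _ (hw ℓ y hy).1).hasDerivWithinAt⟩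
  obtain ⟨hratio, hinf, hquad⟩ :=
    statement19_general c m₁ (hc m₁) V w (fun ℓ => (hVconv ℓ).convexOn) hV0 hinv
  exact ⟨hratio, hinf, fun b hb hVb => (hquad b hb hVb).ge⟩
end
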